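/- arXiv:1703.00145 — 2 statements merged into one kernel-verified Lean document; each statement's English description precedes it below -/
import Mathlib

section
/- Let (X,d) be a bicomplete T0-quasi-metric space and J : X → X a single-valued map continuous with respect to d^s such that r·d(x,y) ≤ d(Jx,Jy) for all x,y ∈ X, for some constant r > 0. Let F : X → CB(X) be a set-valued map satisfying H(Fx,Fy) ≤ α·d(Jx,Jy) for all x,y ∈ X, where α ∈ (0,1) and rα < 1. Then there exists a unique x₀ ∈ X which is both a startpoint and an endpoint of J and F (i.e. H({Jx₀},Fx₀) = 0 = H(Fx₀,{Jx₀})) if and only if J and F have the approximate mix-point property, i.e. inf_{x∈X} sup_{y∈Fx} d^s(Jx,y) = 0. -/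
open Set Filter
open scoped ENNReal

noncomputable section

/-- The symmetrization `d^s(x,y) = max (d x y) (d y x)` of a quasi-pseudometric. -/
def symm2 {X : Type*} (d : X → X → ℝ) (x y : X) : ℝ := max (d x y) (d y x)

/-- The (extended) Hausdorff-type distance
`H(A,B) = max (sup_{a∈A} inf_{b∈B} d a b) (sup_{b∈B} inf_{a∈A} d a b)`. -/
def qH {X : Type*} (d : X → X → ℝ) (A B : Set X) : ℝ≥0∞ :=
  max (⨆ a ∈ A, ⨅ b ∈ B, ENNReal.ofReal (d a b))
      (⨆ b ∈ B, ⨅ a ∈ A, ENNReal.ofReal (d a b))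

/-- Distance from a point to a set: `d(x,A) = inf_{a∈A} d x a`. -/
def dPS {X : Type*} (d : X → X → ℝ) (x : X) (A : Set X) : ℝ≥0∞ :=
  ⨅ a ∈ A, ENNReal.ofReal (d x a)

/-- Distance from a set to a point: `d(A,x) = inf_{a∈A} d a x`. -/
def dSP {X : Type*} (d : X → X → ℝ) (A : Set X) (x : X) : ℝ≥0∞ :=
  ⨅ a ∈ A, ENNReal.ofReal (d a x)

/-!
Let `ρ` be the quasi-metric on the target of `J`. The set function `H` inherits the triangle
inequality from `ρ`, and the mix-point defect `D x = sup_{y ∈ F x} ρ^s(J x, y)` equals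
`max (H({J x}, F x)) (H(F x, {J x}))`. Going from `{J x}` through `F x` and `F y` to `{J y}`
therefore gives `(1 - α) ρ^s(J x, J y) ≤ D x + D y`. As `J` is expansive up to the factor `r`, two
zeros of `D` coincide and a sequence along which `D` tends to `0` is Cauchy. Going from `{J l}`
through `{J x}` and `F x` to `F l` gives `D l ≤ D x + 2 ρ^s(J l, J x)`, so `D` vanishes at the limit
of such a sequence.
-/

section Hausdorff

variable {X : Type*} {d : X → X → ℝ}

theorem symm2_comm (d : X → X → ℝ) (x y : X) : symm2 d x y = symm2 d y x :=
  max_comm _ _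

theorem qH_flip (d : X → X → ℝ) (A B : Set X) : qH (flip d) B A = qH d A B :=
  max_comm _ _

theorem qH_singleton_singleton (d : X → X → ℝ) (x y : X) :
    qH d {x} {y} = ENNReal.ofReal (d x y) := by
  simp [qH]

theorem dPS_le_ofReal_add_dPS (hd_tri : ∀ x y z, d x z ≤ d x y + d y z) (x y : X) (A : Set X) :
    dPS d x A ≤ ENNReal.ofReal (d x y) + dPS d y A := by
  simp only [dPS, ENNReal.add_iInf₂]
  gcongr with a
  exact (ENNReal.ofReal_le_ofReal (hd_tri x y a)).trans ENNReal.ofReal_add_le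

theorem dPS_le_qH_of_mem {a : X} {A B : Set X} (ha : a ∈ A) : dPS d a B ≤ qH d A B :=
  le_max_of_le_left (le_iSup₂ (f := fun a _ => dPS d a B) a ha)

theorem dPS_le_dPS_add_qH (hd_tri : ∀ x y z, d x z ≤ d x y + d y z) (x : X) (A B : Set X) :
    dPS d x B ≤ dPS d x A + qH d A B := by
  rw [dPS.eq_def d x A, ENNReal.iInf₂_add]
  refine le_iInf₂ fun a ha => (dPS_le_ofReal_add_dPS hd_tri x a B).trans ?_
  gcongr
  exact dPS_le_qH_of_mem ha

theorem iSup_dPS_le_qH_add_qH (hd_tri : ∀ x y z, d x z ≤ d x y + d y z) (A B C : Set X) :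
    ⨆ a ∈ A, dPS d a C ≤ qH d A B + qH d B C :=
  iSup₂_le fun a ha =>
    calc
      dPS d a C ≤ dPS d a B + qH d B C := dPS_le_dPS_add_qH hd_tri a B C
      _ ≤ qH d A B + qH d B C := by gcongr; exact dPS_le_qH_of_mem ha

theorem qH_triangle (hd_tri : ∀ x y z, d x z ≤ d x y + d y z) (A B C : Set X) :
    qH d A C ≤ qH d A B + qH d B C := by
  refine max_le (iSup_dPS_le_qH_add_qH hd_tri A B C) ?_
  -- The second supremum is the first one for the conjugate quasi-metric, with `A` and `C` swapped.
  have h_flip_tri : ∀ x y z, flip d x z ≤ flip d x y + flip d y z := fun x y z =>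
    (hd_tri z y x).trans_eq (add_comm _ _)
  calc
    ⨆ c ∈ C, dPS (flip d) c A ≤ qH (flip d) C B + qH (flip d) B A :=
      iSup_dPS_le_qH_add_qH h_flip_tri C B A
    _ = qH d A B + qH d B C := by rw [qH_flip, qH_flip, add_comm]

theorem qH_singleton_left (d : X → X → ℝ) (x : X) {A : Set X} (hA : A.Nonempty) :
    qH d {x} A = ⨆ y ∈ A, ENNReal.ofReal (d x y) := by
  simpa only [qH, mem_singleton_iff, iSup_iSup_eq_left, iInf_iInf_eq_left, sup_eq_right] using
    biInf_le_biSup hA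

theorem qH_singleton_right (d : X → X → ℝ) (x : X) {A : Set X} (hA : A.Nonempty) :
    qH d A {x} = ⨆ y ∈ A, ENNReal.ofReal (d y x) :=
  (qH_flip d A {x}).symm.trans (qH_singleton_left (flip d) x hA)

theorem max_qH_singleton (d : X → X → ℝ) (x : X) {A : Set X} (hA : A.Nonempty) :
    max (qH d {x} A) (qH d A {x}) = ⨆ y ∈ A, ENNReal.ofReal (symm2 d x y) := by
  simp only [qH_singleton_left d x hA, qH_singleton_right d x hA, symm2, ENNReal.ofReal_max,
    iSup_sup_eq]

end Hausdorff

section Minimizing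

theorem exists_seq_tendsto_iInf {ι β : Type*} [Nonempty ι] [CompleteLinearOrder β]
    [TopologicalSpace β] [OrderTopology β] [FirstCountableTopology β] (f : ι → β) :
    ∃ u : ℕ → ι, Tendsto (fun n => f (u n)) atTop (nhds (⨅ i, f i)) := by
  obtain ⟨v, -, hv, hv_mem⟩ :=
    exists_seq_tendsto_sInf (range_nonempty f) (OrderBot.bddBelow (range f))
  choose u hu using hv_mem
  exact ⟨u, by simpa only [hu, sInf_range] using hv⟩

variable {X : Type*} {d : X → X → ℝ} {D : X → ℝ≥0∞} {c : ℝ}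

theorem eq_of_ofReal_mul_symm2_le_add (hd_nonneg : ∀ x y, 0 ≤ d x y)
    (hd_T0 : ∀ x y, d x y = 0 → d y x = 0 → x = y) (hc : 0 < c)
    (hD : ∀ x y, ENNReal.ofReal (c * symm2 d x y) ≤ D x + D y) {x y : X} (hx : D x = 0)
    (hy : D y = 0) : x = y := by
  have h_le : symm2 d x y ≤ 0 := by
    have h := hD x y
    rw [hx, hy, add_zero, nonpos_iff_eq_zero, ENNReal.ofReal_eq_zero] at h
    exact nonpos_of_mul_nonpos_right h hc
  obtain ⟨hxy, hyx⟩ := max_le_iff.1 h_le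
  exact hd_T0 x y (hxy.antisymm (hd_nonneg x y)) (hyx.antisymm (hd_nonneg y x))

theorem exists_forall_symm2_lt_of_tendsto (hc : 0 < c)
    (hD : ∀ x y, ENNReal.ofReal (c * symm2 d x y) ≤ D x + D y) {u : ℕ → X}
    (hu : Tendsto (fun n => D (u n)) atTop (nhds 0)) {ε : ℝ} (hε : 0 < ε) :
    ∃ N : ℕ, ∀ m ≥ N, ∀ n ≥ N, symm2 d (u m) (u n) < ε := by
  have hcε : 0 < c * ε / 2 := by positivity
  obtain ⟨N, hN⟩ := eventually_atTop.1 (hu.eventually_lt_const (ENNReal.ofReal_pos.2 hcε))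
  refine ⟨N, fun m hm n hn => lt_of_mul_lt_mul_left ?_ hc.le⟩
  refine ENNReal.ofReal_mono.reflect_lt ?_
  calc
    ENNReal.ofReal (c * symm2 d (u m) (u n)) ≤ D (u m) + D (u n) := hD _ _
    _ < ENNReal.ofReal (c * ε / 2) + ENNReal.ofReal (c * ε / 2) :=
      ENNReal.add_lt_add (hN m hm) (hN n hn)
    _ = ENNReal.ofReal (c * ε) := by rw [← ENNReal.ofReal_add hcε.le hcε.le, add_halves]

end Minimizing

section MixPoint

variable {X Y : Type*} {d : X → X → ℝ} {ρ : Y → Y → ℝ} {J : X → Y} {F : X → Set Y} {r α : ℝ}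

/-- The mix-point defect `sup_{y ∈ F x} ρ^s(J x, y)` at `x`. The approximate mix-point property says
that its infimum over `x` is `0`. The value is `∞` where these distances are unbounded. -/
def mixDefect (ρ : Y → Y → ℝ) (J : X → Y) (F : X → Set Y) (x : X) : ℝ≥0∞ :=
  ⨆ y ∈ F x, ENNReal.ofReal (symm2 ρ (J x) y)

theorem qH_singleton_left_le_mixDefect {x : X} (hF_ne : (F x).Nonempty) :
    qH ρ {J x} (F x) ≤ mixDefect ρ J F x :=
  (le_max_left _ _).trans_eq (max_qH_singleton ρ (J x) hF_ne)

theorem qH_singleton_right_le_mixDefect {x : X} (hF_ne : (F x).Nonempty) :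
    qH ρ (F x) {J x} ≤ mixDefect ρ J F x :=
  (le_max_right _ _).trans_eq (max_qH_singleton ρ (J x) hF_ne)

theorem mixDefect_eq_zero_iff {x : X} (hF_ne : (F x).Nonempty) :
    mixDefect ρ J F x = 0 ↔ qH ρ {J x} (F x) = 0 ∧ qH ρ (F x) {J x} = 0 := by
  rw [mixDefect, ← max_qH_singleton ρ (J x) hF_ne]
  exact max_eq_bot

theorem ofReal_one_sub_mul_le_mixDefect_add (hρ_nonneg : ∀ x y, 0 ≤ ρ x y)
    (hρ_tri : ∀ x y z, ρ x z ≤ ρ x y + ρ y z) (hF_ne : ∀ x, (F x).Nonempty) (hα : 0 ≤ α)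
    (hcontr : ∀ x y, qH ρ (F x) (F y) ≤ ENNReal.ofReal (α * ρ (J x) (J y))) (x y : X) :
    ENNReal.ofReal ((1 - α) * ρ (J x) (J y)) ≤ mixDefect ρ J F x + mixDefect ρ J F y := by
  have h_chain : ENNReal.ofReal (ρ (J x) (J y)) ≤
      mixDefect ρ J F x + mixDefect ρ J F y + ENNReal.ofReal (α * ρ (J x) (J y)) :=
    calc
      ENNReal.ofReal (ρ (J x) (J y)) = qH ρ {J x} {J y} := (qH_singleton_singleton ρ _ _).symm
      _ ≤ qH ρ {J x} (F x) + qH ρ (F x) {J y} := qH_triangle hρ_tri _ _ _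
      _ ≤ qH ρ {J x} (F x) + (qH ρ (F x) (F y) + qH ρ (F y) {J y}) := by
        gcongr
        exact qH_triangle hρ_tri _ _ _
      _ ≤ mixDefect ρ J F x + (ENNReal.ofReal (α * ρ (J x) (J y)) + mixDefect ρ J F y) := by
        gcongr
        exacts [qH_singleton_left_le_mixDefect (hF_ne x), hcontr x y,
          qH_singleton_right_le_mixDefect (hF_ne y)]
      _ = _ := by ring
  rw [one_sub_mul, ENNReal.ofReal_sub _ (mul_nonneg hα (hρ_nonneg _ _))]
  exact tsub_le_iff_right.2 h_chain

theorem ofReal_mul_symm2_le_mixDefect_add (hρ_nonneg : ∀ x y, 0 ≤ ρ x y)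
    (hρ_tri : ∀ x y z, ρ x z ≤ ρ x y + ρ y z) (hJ_exp : ∀ x y, r * d x y ≤ ρ (J x) (J y))
    (hF_ne : ∀ x, (F x).Nonempty) (hα0 : 0 ≤ α) (hα1 : α ≤ 1)
    (hcontr : ∀ x y, qH ρ (F x) (F y) ≤ ENNReal.ofReal (α * ρ (J x) (J y))) (x y : X) :
    ENNReal.ofReal ((1 - α) * r * symm2 d x y) ≤ mixDefect ρ J F x + mixDefect ρ J F y := by
  have h_dir : ∀ x y, ENNReal.ofReal ((1 - α) * r * d x y) ≤
      mixDefect ρ J F x + mixDefect ρ J F y := fun x y =>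
    calc
      ENNReal.ofReal ((1 - α) * r * d x y) ≤ ENNReal.ofReal ((1 - α) * ρ (J x) (J y)) := by
        rw [mul_assoc]
        refine ENNReal.ofReal_le_ofReal ?_
        exact mul_le_mul_of_nonneg_left (hJ_exp x y) (sub_nonneg.2 hα1)
      _ ≤ mixDefect ρ J F x + mixDefect ρ J F y :=
        ofReal_one_sub_mul_le_mixDefect_add hρ_nonneg hρ_tri hF_ne hα0 hcontr x y
  rcases max_choice (d x y) (d y x) with h | h <;> rw [symm2, h]
  · exact h_dir x y
  · exact (h_dir y x).trans_eq (add_comm _ _)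

theorem mixDefect_le_mixDefect_add (hρ_tri : ∀ x y z, ρ x z ≤ ρ x y + ρ y z)
    (hF_ne : ∀ x, (F x).Nonempty)
    (hF_lip : ∀ x y, qH ρ (F x) (F y) ≤ ENNReal.ofReal (ρ (J x) (J y))) (x l : X) :
    mixDefect ρ J F l ≤ mixDefect ρ J F x + 2 * ENNReal.ofReal (symm2 ρ (J l) (J x)) := by
  set s := ENNReal.ofReal (symm2 ρ (J l) (J x))
  have h_out : ENNReal.ofReal (ρ (J l) (J x)) ≤ s := ENNReal.ofReal_le_ofReal (le_max_left _ _)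
  have h_back : ENNReal.ofReal (ρ (J x) (J l)) ≤ s := ENNReal.ofReal_le_ofReal (le_max_right _ _)
  rw [mixDefect.eq_def ρ J F l, ← max_qH_singleton ρ (J l) (hF_ne l), two_mul, add_left_comm]
  refine max_le ?_ ?_
  · calc
      qH ρ {J l} (F l) ≤ qH ρ {J l} {J x} + (qH ρ {J x} (F x) + qH ρ (F x) (F l)) := by
        grw [qH_triangle hρ_tri {J l} {J x} (F l), qH_triangle hρ_tri {J x} (F x) (F l)]
      _ ≤ s + (mixDefect ρ J F x + s) := by
        grw [qH_singleton_singleton, qH_singleton_left_le_mixDefect (hF_ne x), hF_lip x l, h_out,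
          h_back]
  · calc
      qH ρ (F l) {J l} ≤ qH ρ (F l) (F x) + (qH ρ (F x) {J x} + qH ρ {J x} {J l}) := by
        grw [qH_triangle hρ_tri (F l) (F x) {J l}, qH_triangle hρ_tri (F x) {J x} {J l}]
      _ ≤ s + (mixDefect ρ J F x + s) := by
        grw [qH_singleton_singleton, qH_singleton_right_le_mixDefect (hF_ne x), hF_lip l x, h_out,
          h_back]

theorem mixDefect_eq_zero_of_tendsto (hρ_tri : ∀ x y z, ρ x z ≤ ρ x y + ρ y z)
    (hF_ne : ∀ x, (F x).Nonempty)
    (hF_lip : ∀ x y, qH ρ (F x) (F y) ≤ ENNReal.ofReal (ρ (J x) (J y)))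
    {ι : Type*} {f : Filter ι} [f.NeBot] {u : ι → X} {l : X}
    (hu : Tendsto (fun i => mixDefect ρ J F (u i)) f (nhds 0))
    (hJu : Tendsto (fun i => symm2 ρ (J l) (J (u i))) f (nhds 0)) : mixDefect ρ J F l = 0 := by
  have h_bound : Tendsto (fun i => mixDefect ρ J F (u i) +
      2 * ENNReal.ofReal (symm2 ρ (J l) (J (u i)))) f (nhds 0) := by
    simpa using hu.add (ENNReal.Tendsto.const_mul (ENNReal.tendsto_ofReal hJu) (.inr (by simp)))
  exact nonpos_iff_eq_zero.1
    (ge_of_tendsto' h_bound fun i => mixDefect_le_mixDefect_add hρ_tri hF_ne hF_lip (u i) l)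

theorem tendsto_symm2_comp (hρ_nonneg : ∀ x y, 0 ≤ ρ x y) {l : X}
    (hJ_cont : ∀ ε : ℝ, 0 < ε → ∃ δ : ℝ, 0 < δ ∧
      ∀ y : X, symm2 d l y < δ → symm2 ρ (J l) (J y) < ε)
    {u : ℕ → X} (hu : ∀ ε : ℝ, 0 < ε → ∃ N : ℕ, ∀ n ≥ N, symm2 d (u n) l < ε) :
    Tendsto (fun n => symm2 ρ (J l) (J (u n))) atTop (nhds 0) := by
  refine tendsto_order.2 ⟨fun a ha => .of_forall fun n =>
    ha.trans_le (le_max_of_le_left (hρ_nonneg _ _)), fun ε hε => ?_⟩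
  obtain ⟨δ, hδ, hJδ⟩ := hJ_cont ε hε
  obtain ⟨N, hN⟩ := hu δ hδ
  exact eventually_atTop.2 ⟨N, fun n hn => hJδ _ (symm2_comm d l (u n) ▸ hN n hn)⟩

end MixPoint

theorem stmt6_general {X Y : Type*} {d : X → X → ℝ} {ρ : Y → Y → ℝ} {J : X → Y} {F : X → Set Y}
    {r α : ℝ}
    (hd_nonneg : ∀ x y : X, 0 ≤ d x y)
    (hd_T0 : ∀ x y : X, d x y = 0 → d y x = 0 → x = y)
    (hbicomplete : ∀ u : ℕ → X,
      (∀ ε : ℝ, 0 < ε → ∃ N : ℕ, ∀ m ≥ N, ∀ n ≥ N, symm2 d (u m) (u n) < ε) →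
      ∃ l : X, ∀ ε : ℝ, 0 < ε → ∃ N : ℕ, ∀ n ≥ N, symm2 d (u n) l < ε)
    (hρ_nonneg : ∀ x y : Y, 0 ≤ ρ x y)
    (hρ_tri : ∀ x y z : Y, ρ x z ≤ ρ x y + ρ y z)
    (hJ_cont : ∀ x : X, ∀ ε : ℝ, 0 < ε → ∃ δ : ℝ, 0 < δ ∧
      ∀ y : X, symm2 d x y < δ → symm2 ρ (J x) (J y) < ε)
    (hr : 0 < r) (hJ_exp : ∀ x y : X, r * d x y ≤ ρ (J x) (J y))
    (hF_ne : ∀ x : X, (F x).Nonempty) (hα0 : 0 ≤ α) (hα1 : α < 1)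
    (hcontr : ∀ x y : X, qH ρ (F x) (F y) ≤ ENNReal.ofReal (α * ρ (J x) (J y))) :
    (∃! x₀ : X, qH ρ {J x₀} (F x₀) = 0 ∧ qH ρ (F x₀) {J x₀} = 0) ↔
      (⨅ x : X, ⨆ y ∈ F x, ENNReal.ofReal (symm2 ρ (J x) y)) = 0 := by
  simp only [← mixDefect_eq_zero_iff (hF_ne _)]
  refine ⟨fun ⟨x, hx, _⟩ => nonpos_iff_eq_zero.1 (iInf_le_of_le x hx.le), fun hinf => ?_⟩
  have hc : 0 < (1 - α) * r := mul_pos (sub_pos.2 hα1) hr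
  have hsep := ofReal_mul_symm2_le_mixDefect_add hρ_nonneg hρ_tri hJ_exp hF_ne hα0 hα1.le hcontr
  have hF_lip : ∀ x y, qH ρ (F x) (F y) ≤ ENNReal.ofReal (ρ (J x) (J y)) := fun x y =>
    (hcontr x y).trans (ENNReal.ofReal_le_ofReal (mul_le_of_le_one_left (hρ_nonneg _ _) hα1.le))
  have : Nonempty X := not_isEmpty_iff.1 fun _ => by simp [iInf_of_empty] at hinf
  obtain ⟨u, hu⟩ := exists_seq_tendsto_iInf (mixDefect ρ J F)
  replace hu : Tendsto (fun n => mixDefect ρ J F (u n)) atTop (nhds 0) := hinf ▸ hu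
  obtain ⟨l, hl⟩ := hbicomplete u fun _ => exists_forall_symm2_lt_of_tendsto hc hsep hu
  have hl_zero : mixDefect ρ J F l = 0 :=
    mixDefect_eq_zero_of_tendsto hρ_tri hF_ne hF_lip hu
      (tendsto_symm2_comp hρ_nonneg (hJ_cont l) hl)
  exact ⟨l, hl_zero, fun y hy => eq_of_ofReal_mul_symm2_le_add hd_nonneg hd_T0 hc hsep hy hl_zero⟩

theorem stmt6 {X : Type*} [Nonempty X]
    (d : X → X → ℝ)
    (hd_nonneg : ∀ x y : X, 0 ≤ d x y)
    (hd_refl : ∀ x : X, d x x = 0)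
    (hd_tri : ∀ x y z : X, d x z ≤ d x y + d y z)
    (hd_T0 : ∀ x y : X, d x y = 0 → d y x = 0 → x = y)
    (hbicomplete : ∀ u : ℕ → X,
      (∀ ε : ℝ, 0 < ε → ∃ N : ℕ, ∀ m ≥ N, ∀ n ≥ N, symm2 d (u m) (u n) < ε) →
      ∃ l : X, ∀ ε : ℝ, 0 < ε → ∃ N : ℕ, ∀ n ≥ N, symm2 d (u n) l < ε)
    (J : X → X)
    (hJ_cont : ∀ x : X, ∀ ε : ℝ, 0 < ε → ∃ δ : ℝ, 0 < δ ∧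
      ∀ y : X, symm2 d x y < δ → symm2 d (J x) (J y) < ε)
    (r : ℝ) (hr : 0 < r)
    (hJ_exp : ∀ x y : X, r * d x y ≤ d (J x) (J y))
    (F : X → Set X)
    (hF_ne : ∀ x : X, (F x).Nonempty)
    (hF_bdd : ∀ x : X, ∃ M : ℝ, ∀ a ∈ F x, ∀ c ∈ F x, symm2 d a c ≤ M)
    (hF_closed : ∀ x : X, ∀ u : ℕ → X, (∀ n : ℕ, u n ∈ F x) → ∀ l : X,
      Filter.Tendsto (fun n => symm2 d (u n) l) Filter.atTop (nhds (0 : ℝ)) → l ∈ F x)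
    (α : ℝ) (hα0 : 0 < α) (hα1 : α < 1) (hrα : r * α < 1)
    (hcontr : ∀ x y : X, qH d (F x) (F y) ≤ ENNReal.ofReal (α * d (J x) (J y)))
    :
    (∃! x₀ : X, qH d {J x₀} (F x₀) = 0 ∧ qH d (F x₀) {J x₀} = 0) ↔ (⨅ x : X, ⨆ y ∈ F x, ENNReal.ofReal (symm2 d (J x) y)) = 0 := by
  exact stmt6_general hd_nonneg hd_T0 hbicomplete hd_nonneg hd_tri hJ_cont hr hJ_exp hF_ne hα0.le
    hα1 hcontr
end
end

section
/- Let (X,d,b) be a bicomplete T0-quasi-pseudometric type space and J : X → X a single-valued map continuous with respect to d^s such that r·d(x,y) ≤ d(Jx,Jy) for all x,y ∈ X, for some constant r > 0. Let F : X → CB(X) be a set-valued map satisfying H(Fx,Fy) ≤ α·[d(Jx,Fx) + d(Jy,Fy)] for all x,y ∈ X, where α ∈ (0,1/2). Then for every ε > 0, the set C_ε = { x ∈ X : sup_{y∈Fx} d^s(Jx,y) ≤ ε } has diameter δ(C_ε) = sup_{x,y∈C_ε} d^s(x,y) at most (bε/r)(1 + b + 2αb). -/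
open Set Filter
open scoped ENNReal

noncomputable section

/-!
If `x, z ∈ C_ε`, the contraction condition bounds the Hausdorff distance of the images by
`H(Fx, Fz) ≤ α (ε + ε)`. Pick `y ∈ Fx` and a nearly closest `w ∈ Fz`: the triangle inequality along
`Jx → y → w → Jz` gives `d(Jx, Jz) ≤ b (ε + b (2αε + ε))`, and expansiveness of `J` divides this
by `r`.
-/

section PointToSet

variable {Y : Type*} {d : Y → Y → ℝ} {b s t ε : ℝ} {p q : Y} {A B : Set Y}

theorem dPS_le_ofReal (hA : A.Nonempty) (hpA : ∀ a ∈ A, d p a ≤ ε) :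
    dPS d p A ≤ ENNReal.ofReal ε := by
  obtain ⟨a, ha⟩ := hA
  exact (iInf₂_le a ha).trans (ENNReal.ofReal_le_ofReal (hpA a ha))

theorem exists_lt_of_dPS_lt_ofReal (h : dPS d p A < ENNReal.ofReal s) : ∃ a ∈ A, d p a < s := by
  simp only [dPS, iInf_lt_iff] at h
  obtain ⟨a, ha, has⟩ := h
  exact ⟨a, ha, (ENNReal.ofReal_lt_ofReal_iff'.1 has).1⟩

theorem dPS_le_qH (hp : p ∈ A) : dPS d p B ≤ qH d A B :=
  (le_iSup₂ (f := fun a (_ : a ∈ A) => dPS d a B) p hp).trans (le_max_left _ _)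

theorem le_of_dPS_le_ofReal (hb : 0 ≤ b) (htri : ∀ x y z, d x z ≤ b * (d x y + d y z))
    (hs : 0 ≤ s) (hpB : dPS d p B ≤ ENNReal.ofReal s) (hBq : ∀ w ∈ B, d w q ≤ t) :
    d p q ≤ b * (s + t) := by
  -- The infimum need not be attained, so bound by every `s' > s` and let `s'` decrease to `s`.
  have hlt : ∀ s' > s, d p q ≤ b * (s' + t) := by
    intro s' hs'
    have hpos : 0 < s' := hs.trans_lt hs'
    obtain ⟨w, hw, hpw⟩ := exists_lt_of_dPS_lt_ofReal
      (hpB.trans_lt ((ENNReal.ofReal_lt_ofReal_iff hpos).2 hs'))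
    calc d p q ≤ b * (d p w + d w q) := htri p w q
      _ ≤ b * (s' + t) := by gcongr; exact hBq w hw
  have hcont : Continuous fun s' => b * (s' + t) := by fun_prop
  exact ge_of_tendsto (hcont.continuousWithinAt (s := Ioi s) (x := s))
    (eventually_mem_nhdsWithin.mono hlt)

theorem le_of_qH_le_ofReal (hb : 0 ≤ b) (htri : ∀ x y z, d x z ≤ b * (d x y + d y z))
    (hs : 0 ≤ s) (hA : A.Nonempty) (hpA : ∀ y ∈ A, d p y ≤ ε)
    (hAB : qH d A B ≤ ENNReal.ofReal s) (hBq : ∀ w ∈ B, d w q ≤ t) :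
    d p q ≤ b * (ε + b * (s + t)) := by
  obtain ⟨y, hy⟩ := hA
  calc d p q ≤ b * (d p y + d y q) := htri p y q
    _ ≤ b * (ε + b * (s + t)) := by
      gcongr
      · exact hpA y hy
      · exact le_of_dPS_le_ofReal hb htri hs ((dPS_le_qH hy).trans hAB) hBq

end PointToSet

theorem mul_symm2_le_symm2 {X Y : Type*} {e : X → X → ℝ} {d : Y → Y → ℝ} {J : X → Y} {r : ℝ}
    (hr : 0 ≤ r) (hJ : ∀ x z, r * e x z ≤ d (J x) (J z)) (x z : X) :
    r * symm2 e x z ≤ symm2 d (J x) (J z) := by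
  rw [symm2, mul_max_of_nonneg _ _ hr]
  exact max_le_max (hJ x z) (hJ z x)

/-- The Kannan-type contraction condition on a set-valued map `F` relative to `J`, with constant
`α`: `H(Fx, Fz) ≤ α (d(Jx, Fx) + d(Jz, Fz))`. A negative `α` is truncated to `0`. -/
def IsKannanWith {X Y : Type*} (α : ℝ) (d : Y → Y → ℝ) (J : X → Y) (F : X → Set Y) : Prop :=
  ∀ x z, qH d (F x) (F z) ≤ ENNReal.ofReal α * (dPS d (J x) (F x) + dPS d (J z) (F z))

/-- The set `C_ε` of `ε`-approximate endpoints of `F` relative to `J`, i.e. the points `x` such that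
`F x` lies within symmetrized distance `ε` of `J x`. The supremum is written as a pointwise bound,
so that the condition concerns real numbers only. -/
def approxEndpoints {X Y : Type*} (d : Y → Y → ℝ) (J : X → Y) (F : X → Set Y) (ε : ℝ) : Set X :=
  {x | ∀ y ∈ F x, symm2 d (J x) y ≤ ε}

section Kannan

variable {X Y : Type*} {d : Y → Y → ℝ} {J : X → Y} {F : X → Set Y} {b α ε : ℝ} {x z : X}

theorem iSup_symm2_le_iff_mem_approxEndpoints (hε : 0 ≤ ε) :
    (⨆ y ∈ F x, ENNReal.ofReal (symm2 d (J x) y)) ≤ ENNReal.ofReal ε ↔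
      x ∈ approxEndpoints d J F ε := by
  simp only [iSup_le_iff, ENNReal.ofReal_le_ofReal_iff hε, approxEndpoints, mem_ofPred_eq]

theorem dPS_le_of_mem_approxEndpoints (hF : (F x).Nonempty) (hx : x ∈ approxEndpoints d J F ε) :
    dPS d (J x) (F x) ≤ ENNReal.ofReal ε :=
  dPS_le_ofReal hF fun y hy => (le_max_left _ _).trans (hx y hy)

theorem IsKannanWith.qH_le (hcontr : IsKannanWith α d J F) (hα : 0 ≤ α)
    (hF : ∀ x, (F x).Nonempty)
    (hx : x ∈ approxEndpoints d J F ε) (hz : z ∈ approxEndpoints d J F ε) :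
    qH d (F x) (F z) ≤ ENNReal.ofReal (2 * α * ε) :=
  calc qH d (F x) (F z)
      ≤ ENNReal.ofReal α * (dPS d (J x) (F x) + dPS d (J z) (F z)) := hcontr x z
    _ ≤ ENNReal.ofReal α * (ENNReal.ofReal ε + ENNReal.ofReal ε) := by
      gcongr
      · exact dPS_le_of_mem_approxEndpoints (hF x) hx
      · exact dPS_le_of_mem_approxEndpoints (hF z) hz
    _ = ENNReal.ofReal (2 * α * ε) := by
      rw [ENNReal.ofReal_mul (by positivity), ENNReal.ofReal_mul zero_le_two, ENNReal.ofReal_ofNat]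
      ring

theorem IsKannanWith.image_le (hcontr : IsKannanWith α d J F) (hb : 0 ≤ b)
    (htri : ∀ x y z, d x z ≤ b * (d x y + d y z)) (hα : 0 ≤ α) (hε : 0 ≤ ε)
    (hF : ∀ x, (F x).Nonempty)
    (hx : x ∈ approxEndpoints d J F ε) (hz : z ∈ approxEndpoints d J F ε) :
    d (J x) (J z) ≤ b * ε * (1 + b + 2 * α * b) :=
  calc d (J x) (J z) ≤ b * (ε + b * (2 * α * ε + ε)) :=
      le_of_qH_le_ofReal hb htri (by positivity) (hF x)
        (fun y hy => (le_max_left _ _).trans (hx y hy))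
        (hcontr.qH_le hα hF hx hz)
        (fun w hw => (le_max_right _ _).trans (hz w hw))
    _ = b * ε * (1 + b + 2 * α * b) := by ring

theorem IsKannanWith.symm2_image_le (hcontr : IsKannanWith α d J F) (hb : 0 ≤ b)
    (htri : ∀ x y z, d x z ≤ b * (d x y + d y z)) (hα : 0 ≤ α) (hε : 0 ≤ ε)
    (hF : ∀ x, (F x).Nonempty)
    (hx : x ∈ approxEndpoints d J F ε) (hz : z ∈ approxEndpoints d J F ε) :
    symm2 d (J x) (J z) ≤ b * ε * (1 + b + 2 * α * b) :=
  max_le (hcontr.image_le hb htri hα hε hF hx hz) (hcontr.image_le hb htri hα hε hF hz hx)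

end Kannan

theorem stmt15_general {X Y : Type*} {e : X → X → ℝ} {d : Y → Y → ℝ} {b : ℝ} (hb : 0 ≤ b)
    (htri : ∀ x y z, d x z ≤ b * (d x y + d y z))
    {J : X → Y} {r : ℝ} (hr : 0 < r) (hJ : ∀ x z, r * e x z ≤ d (J x) (J z))
    {F : X → Set Y} (hF : ∀ x, (F x).Nonempty) {α : ℝ} (hα : 0 ≤ α)
    (hcontr : IsKannanWith α d J F) {ε : ℝ} (hε : 0 ≤ ε) :
    (⨆ (x : X) (_ : (⨆ y ∈ F x, ENNReal.ofReal (symm2 d (J x) y)) ≤ ENNReal.ofReal ε)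
       (z : X) (_ : (⨆ y ∈ F z, ENNReal.ofReal (symm2 d (J z) y)) ≤ ENNReal.ofReal ε),
       ENNReal.ofReal (symm2 e x z))
    ≤ ENNReal.ofReal (b * ε / r * (1 + b + 2 * α * b)) := by
  simp only [iSup_symm2_le_iff_mem_approxEndpoints hε, iSup_le_iff]
  intro x hx z hz
  apply ENNReal.ofReal_le_ofReal
  rw [div_mul_eq_mul_div, le_div_iff₀' hr]
  exact (mul_symm2_le_symm2 hr.le hJ x z).trans (hcontr.symm2_image_le hb htri hα hε hF hx hz)

theorem stmt15 {X : Type*} [Nonempty X]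
    (d : X → X → ℝ) (b : ℝ) (hb : 1 ≤ b)
    (hd_nonneg : ∀ x y : X, 0 ≤ d x y)
    (hd_refl : ∀ x : X, d x x = 0)
    (hd_tri : ∀ x y z : X, d x z ≤ b * (d x y + d y z))
    (hd_T0 : ∀ x y : X, d x y = 0 → d y x = 0 → x = y)
    (hbicomplete : ∀ u : ℕ → X,
      (∀ ε : ℝ, 0 < ε → ∃ N : ℕ, ∀ m ≥ N, ∀ n ≥ N, symm2 d (u m) (u n) < ε) →
      ∃ l : X, ∀ ε : ℝ, 0 < ε → ∃ N : ℕ, ∀ n ≥ N, symm2 d (u n) l < ε)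
    (J : X → X)
    (hJ_cont : ∀ x : X, ∀ ε : ℝ, 0 < ε → ∃ δ : ℝ, 0 < δ ∧
      ∀ y : X, symm2 d x y < δ → symm2 d (J x) (J y) < ε)
    (r : ℝ) (hr : 0 < r)
    (hJ_exp : ∀ x y : X, r * d x y ≤ d (J x) (J y))
    (F : X → Set X)
    (hF_ne : ∀ x : X, (F x).Nonempty)
    (hF_bdd : ∀ x : X, ∃ M : ℝ, ∀ a ∈ F x, ∀ c ∈ F x, symm2 d a c ≤ M)
    (hF_closed : ∀ x : X, ∀ u : ℕ → X, (∀ n : ℕ, u n ∈ F x) → ∀ l : X,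
      Filter.Tendsto (fun n => symm2 d (u n) l) Filter.atTop (nhds (0 : ℝ)) → l ∈ F x)
    (α : ℝ) (hα0 : 0 < α) (hα1 : α < 1 / 2)
    (hcontr : ∀ x y : X, qH d (F x) (F y) ≤ ENNReal.ofReal α * (dPS d (J x) (F x) + dPS d (J y) (F y)))
    :
    ∀ ε : ℝ, 0 < ε →
      (⨆ (x : X) (_ : (⨆ y ∈ F x, ENNReal.ofReal (symm2 d (J x) y)) ≤ ENNReal.ofReal ε)
         (z : X) (_ : (⨆ y ∈ F z, ENNReal.ofReal (symm2 d (J z) y)) ≤ ENNReal.ofReal ε),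
         ENNReal.ofReal (symm2 d x z))
      ≤ ENNReal.ofReal (b * ε / r * (1 + b + 2 * α * b)) :=
  fun _ hε => stmt15_general (zero_le_one.trans hb) hd_tri hr hJ_exp hF_ne hα0.le hcontr hε.le
end
end
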